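/- Let K be a field, let n ≤ m, and let B₁,…,B_k ∈ K^{m×n} be a linearly independent family of matrices generating a column-nondegenerate matrix rank-metric code C = span_K{B₁,…,B_k}, with associated column-system S. For every t ∈ {1,…,k}: d_t^r(C) = n − ⌊(k−t)/m⌋ if and only if S is (k−t)-column-scattered, i.e., every subspace W ⊆ K^k with dim_K W = k − t satisfies m·dim_K S_c(W) ≤ k − t. -/

import Mathlib

open Matrix

section Defs

variable {K : Type*} [Field K]

/-- The row space of a matrix: the span of its rows in `K^b`. -/
noncomputable def rowSpace {a b : ℕ} (M : Matrix (Fin a) (Fin b) K) :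
    Submodule K (Fin b → K) :=
  Submodule.span K (Set.range fun i => M i)

/-- The column space of a matrix: the span of its columns in `K^a`. -/
noncomputable def colSpace {a b : ℕ} (M : Matrix (Fin a) (Fin b) K) :
    Submodule K (Fin a → K) :=
  Submodule.span K (Set.range fun j i => M i j)

/-- `Sc S U = {X ∈ S : colsp(X) ⊆ U}`, a subspace of the matrix space. -/
noncomputable def Sc {a b : ℕ} (S : Submodule K (Matrix (Fin a) (Fin b) K))
    (U : Submodule K (Fin a → K)) : Submodule K (Matrix (Fin a) (Fin b) K) where
  carrier := {X | X ∈ S ∧ colSpace X ≤ U}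
  add_mem' := by
    rintro X Y ⟨hXS, hXU⟩ ⟨hYS, hYU⟩
    refine ⟨S.add_mem hXS hYS, ?_⟩
    rw [colSpace, Submodule.span_le]
    rintro v ⟨j, rfl⟩
    have hx : (fun i => X i j) ∈ U := hXU (Submodule.subset_span ⟨j, rfl⟩)
    have hy : (fun i => Y i j) ∈ U := hYU (Submodule.subset_span ⟨j, rfl⟩)
    exact U.add_mem hx hy
  zero_mem' := by
    refine ⟨S.zero_mem, ?_⟩
    rw [colSpace, Submodule.span_le]
    rintro v ⟨j, rfl⟩
    exact U.zero_mem
  smul_mem' := by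
    rintro c X ⟨hXS, hXU⟩
    refine ⟨S.smul_mem c hXS, ?_⟩
    rw [colSpace, Submodule.span_le]
    rintro v ⟨j, rfl⟩
    exact U.smul_mem c (hXU (Submodule.subset_span ⟨j, rfl⟩))

/-- `Sr S U = {X ∈ S : rowsp(X) ⊆ U}`, a subspace of the matrix space. -/
noncomputable def Sr {a b : ℕ} (S : Submodule K (Matrix (Fin a) (Fin b) K))
    (U : Submodule K (Fin b → K)) : Submodule K (Matrix (Fin a) (Fin b) K) where
  carrier := {X | X ∈ S ∧ rowSpace X ≤ U}
  add_mem' := by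
    rintro X Y ⟨hXS, hXU⟩ ⟨hYS, hYU⟩
    refine ⟨S.add_mem hXS hYS, ?_⟩
    rw [rowSpace, Submodule.span_le]
    rintro v ⟨i, rfl⟩
    have hx : X i ∈ U := hXU (Submodule.subset_span ⟨i, rfl⟩)
    have hy : Y i ∈ U := hYU (Submodule.subset_span ⟨i, rfl⟩)
    exact U.add_mem hx hy
  zero_mem' := by
    refine ⟨S.zero_mem, ?_⟩
    rw [rowSpace, Submodule.span_le]
    rintro v ⟨i, rfl⟩
    exact U.zero_mem
  smul_mem' := by
    rintro c X ⟨hXS, hXU⟩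
    refine ⟨S.smul_mem c hXS, ?_⟩
    rw [rowSpace, Submodule.span_le]
    rintro v ⟨i, rfl⟩
    exact U.smul_mem c (hXU (Submodule.subset_span ⟨i, rfl⟩))

/-- Row support of a set of matrices: the sum of the row spaces of its elements. -/
noncomputable def rowSupport {a b : ℕ} (D : Submodule K (Matrix (Fin a) (Fin b) K)) :
    Submodule K (Fin b → K) :=
  ⨆ M ∈ D, rowSpace M

/-- Column support of a set of matrices: the sum of the column spaces of its elements. -/
noncomputable def colSupport {a b : ℕ} (D : Submodule K (Matrix (Fin a) (Fin b) K)) :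
    Submodule K (Fin a → K) :=
  ⨆ M ∈ D, colSpace M

/-- The hyperplane `u^⊥ = {v : ∑ i, u i * v i = 0}`. -/
noncomputable def perp {a : ℕ} (u : Fin a → K) : Submodule K (Fin a → K) where
  carrier := {v | ∑ i, u i * v i = 0}
  add_mem' := by
    intro v w hv hw
    simp only [Set.mem_setOf_eq, Pi.add_apply, mul_add, Finset.sum_add_distrib] at *
    simp [hv, hw]
  zero_mem' := by simp
  smul_mem' := by
    intro c v hv
    simp only [Set.mem_setOf_eq, Pi.smul_apply, smul_eq_mul] at *
    have : ∑ i, u i * (c * v i) = c * ∑ i, u i * v i := by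
      rw [Finset.mul_sum]; congr 1; ext i; ring
    simp [this, hv]

/-- The orthogonal complement `U^⊥ = {v : ∀ u ∈ U, ∑ i, u i * v i = 0}`. -/
noncomputable def perpSub {a : ℕ} (U : Submodule K (Fin a → K)) : Submodule K (Fin a → K) :=
  ⨅ u ∈ U, perp u

/-- The slices of the column-system: `(X l) i j = (B i) j l`. -/
def colSlices {m n k : ℕ} (B : Fin k → Matrix (Fin m) (Fin n) K) :
    Fin n → Matrix (Fin k) (Fin m) K :=
  fun l => Matrix.of fun i j => B i j l

/-- The slices of the row-system: `(Y j) l i = (B i) j l`. -/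
def rowSlices {m n k : ℕ} (B : Fin k → Matrix (Fin m) (Fin n) K) :
    Fin m → Matrix (Fin n) (Fin k) K :=
  fun j => Matrix.of fun l i => B i j l

/-- The linear map `u ↦ ∑ i, u i • B i` (i.e. `u ↦ m₁(T,u)`). -/
noncomputable def combMap {m n k : ℕ} (B : Fin k → Matrix (Fin m) (Fin n) K) :
    (Fin k → K) →ₗ[K] Matrix (Fin m) (Fin n) K where
  toFun u := ∑ i, u i • B i
  map_add' := by intro u v; simp [add_smul, Finset.sum_add_distrib]
  map_smul' := by intro c u; simp [smul_smul, Finset.smul_sum]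

/-- The `t`-th row-generalized rank weight. -/
noncomputable def dRow {a b : ℕ} (C : Submodule K (Matrix (Fin a) (Fin b) K)) (t : ℕ) : ℕ :=
  sInf {r | ∃ D : Submodule K (Matrix (Fin a) (Fin b) K),
    D ≤ C ∧ Module.finrank K D = t ∧ Module.finrank K (rowSupport D) = r}

/-- The `t`-th column-generalized rank weight. -/
noncomputable def dCol {a b : ℕ} (C : Submodule K (Matrix (Fin a) (Fin b) K)) (t : ℕ) : ℕ :=
  sInf {r | ∃ D : Submodule K (Matrix (Fin a) (Fin b) K),
    D ≤ C ∧ Module.finrank K D = t ∧ Module.finrank K (colSupport D) = r}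

end Defs

open Module

section Helpers

variable {K : Type*} [Field K]

theorem finrank_map_of_injective {V V' : Type*} [AddCommGroup V] [Module K V] [AddCommGroup V']
    [Module K V'] {f : V →ₗ[K] V'} (hf : Function.Injective f) (U : Submodule K V) :
    finrank K (U.map f) = finrank K U :=
  (Submodule.equivMapOfInjective f hf U).finrank_eq.symm

theorem mem_perpSub {a : ℕ} {U : Submodule K (Fin a → K)} {v : Fin a → K} :
    v ∈ perpSub U ↔ ∀ u ∈ U, u ⬝ᵥ v = 0 := by
  simp only [perpSub, Submodule.mem_iInf]
  rfl

theorem perpSub_eq_orthogonal {a : ℕ} (U : Submodule K (Fin a → K)) :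
    perpSub U = LinearMap.BilinForm.orthogonal (dotProductBilin K K) U := by
  ext v
  rw [mem_perpSub]
  rfl

theorem perpSub_top {a : ℕ} : perpSub (⊤ : Submodule K (Fin a → K)) = ⊥ := by
  refine (Submodule.eq_bot_iff _).2 fun v hv => dotProduct_eq_zero v fun w => ?_
  rw [dotProduct_comm]
  exact mem_perpSub.1 hv w trivial

theorem finrank_add_finrank_perpSub {a : ℕ} (U : Submodule K (Fin a → K)) :
    finrank K U + finrank K (perpSub U) = a := by
  have hrefl : LinearMap.BilinForm.IsRefl
      (dotProductBilin K K : LinearMap.BilinForm K (Fin a → K)) :=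
    fun x y h => (dotProduct_comm y x).trans h
  have h := LinearMap.BilinForm.finrank_add_finrank_orthogonal hrefl U
  rw [← perpSub_eq_orthogonal, ← perpSub_eq_orthogonal, perpSub_top, inf_bot_eq, finrank_bot,
    finrank_fin_fun, add_zero] at h
  exact h

theorem perpSub_perpSub {a : ℕ} (U : Submodule K (Fin a → K)) : perpSub (perpSub U) = U := by
  refine (Submodule.eq_of_le_of_finrank_eq (fun u hu => mem_perpSub.2 fun v hv => ?_) ?_).symm
  · rw [dotProduct_comm]
    exact mem_perpSub.1 hv u hu
  · have h₁ := finrank_add_finrank_perpSub U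
    have h₂ := finrank_add_finrank_perpSub (perpSub U)
    lia

theorem colSpace_le_perpSub_iff {a b : ℕ} {X : Matrix (Fin a) (Fin b) K}
    {U : Submodule K (Fin a → K)} : colSpace X ≤ perpSub U ↔ ∀ u ∈ U, u ᵥ* X = 0 := by
  rw [colSpace, Submodule.span_le, Set.range_subset_iff]
  simp only [SetLike.mem_coe, mem_perpSub, funext_iff]
  exact ⟨fun h u hu j => h j u hu, fun h j u hu => h u hu j⟩

theorem rowSupport_le_iff {a b : ℕ} {D : Submodule K (Matrix (Fin a) (Fin b) K)}
    {V : Submodule K (Fin b → K)} : rowSupport D ≤ V ↔ ∀ M ∈ D, ∀ i, M i ∈ V := by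
  simp only [rowSupport, rowSpace, iSup_le_iff, Submodule.span_le, Set.range_subset_iff,
    SetLike.mem_coe]

theorem mem_perpSub_rowSupport {a b : ℕ} {D : Submodule K (Matrix (Fin a) (Fin b) K)}
    {v : Fin b → K} : v ∈ perpSub (rowSupport D) ↔ ∀ M ∈ D, M *ᵥ v = 0 := by
  constructor
  · intro h M hM
    ext i
    exact mem_perpSub.1 h (M i) (rowSupport_le_iff.1 le_rfl M hM i)
  · intro h
    have hle : rowSupport D ≤ perpSub (Submodule.span K {v}) :=
      rowSupport_le_iff.2 fun M hM i => mem_perpSub.2 fun u hu => by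
        obtain ⟨c, rfl⟩ := Submodule.mem_span_singleton.1 hu
        rw [smul_dotProduct, dotProduct_comm]
        exact (congrArg (c • ·) (congrFun (h M hM) i)).trans (smul_zero c)
    refine mem_perpSub.2 fun u hu => ?_
    rw [dotProduct_comm]
    exact mem_perpSub.1 (hle hu) v (Submodule.mem_span_singleton_self v)

theorem vecMul_combMap_colSlices {m n k : ℕ} (B : Fin k → Matrix (Fin m) (Fin n) K)
    (u : Fin k → K) (v : Fin n → K) :
    u ᵥ* combMap (colSlices B) v = combMap B u *ᵥ v := by
  ext j
  simp only [combMap, colSlices, LinearMap.coe_mk, AddHom.coe_mk, vecMul, mulVec, dotProduct,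
    Matrix.sum_apply, Matrix.smul_apply, Matrix.of_apply, smul_eq_mul, Finset.mul_sum,
    Finset.sum_mul]
  rw [Finset.sum_comm]
  exact Finset.sum_congr rfl fun l _ => Finset.sum_congr rfl fun i _ => by ring

theorem range_combMap {m n k : ℕ} (B : Fin k → Matrix (Fin m) (Fin n) K) :
    LinearMap.range (combMap B) = Submodule.span K (Set.range B) :=
  Fintype.range_linearCombination K B

theorem combMap_injective {m n k : ℕ} {B : Fin k → Matrix (Fin m) (Fin n) K}
    (hB : LinearIndependent K B) : Function.Injective (combMap B) :=
  hB.fintypeLinearCombination_injective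

theorem combMap_colSlices_injective {m n k : ℕ} {B : Fin k → Matrix (Fin m) (Fin n) K}
    (hnd : rowSupport (LinearMap.range (combMap B)) = ⊤) :
    Function.Injective (combMap (colSlices B)) := by
  refine (injective_iff_map_eq_zero _).2 fun v hv => ?_
  have hmem : v ∈ perpSub (rowSupport (LinearMap.range (combMap B))) := by
    refine mem_perpSub_rowSupport.2 ?_
    rintro _ ⟨u, rfl⟩
    rw [← vecMul_combMap_colSlices, hv, vecMul_zero]
  rwa [hnd, perpSub_top, Submodule.mem_bot] at hmem

/-- Restricting the column-system to `U^⊥` is dual to taking the row support of the subcode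
with coefficient space `U`. -/
theorem Sc_perpSub {m n k : ℕ} (B : Fin k → Matrix (Fin m) (Fin n) K)
    (U : Submodule K (Fin k → K)) :
    Sc (LinearMap.range (combMap (colSlices B))) (perpSub U) =
      (perpSub (rowSupport (U.map (combMap B)))).map (combMap (colSlices B)) := by
  have key (v : Fin n → K) : colSpace (combMap (colSlices B) v) ≤ perpSub U ↔
      v ∈ perpSub (rowSupport (U.map (combMap B))) := by
    simp only [colSpace_le_perpSub_iff, mem_perpSub_rowSupport, vecMul_combMap_colSlices,
      Submodule.mem_map, forall_exists_index, and_imp, forall_apply_eq_imp_iff₂]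
  ext X
  constructor
  · rintro ⟨⟨v, rfl⟩, hv⟩
    exact ⟨v, (key v).1 hv, rfl⟩
  · rintro ⟨v, hv, rfl⟩
    exact ⟨⟨v, rfl⟩, (key v).2 hv⟩

theorem finrank_rowSupport_add_finrank_Sc {m n k : ℕ} {B : Fin k → Matrix (Fin m) (Fin n) K}
    (hnd : rowSupport (LinearMap.range (combMap B)) = ⊤) (U : Submodule K (Fin k → K)) :
    finrank K (rowSupport (U.map (combMap B))) +
      finrank K (Sc (LinearMap.range (combMap (colSlices B))) (perpSub U)) = n := by
  rw [Sc_perpSub, finrank_map_of_injective (combMap_colSlices_injective hnd)]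
  exact finrank_add_finrank_perpSub _

theorem exists_submodule_le_finrank_eq {V : Type*} [AddCommGroup V] [Module K V]
    [FiniteDimensional K V] (U : Submodule K V) {t : ℕ} (ht : t ≤ finrank K U) :
    ∃ U' ≤ U, finrank K U' = t := by
  let b := fun i : Fin t => (finBasis K U (Fin.castLE ht i) : V)
  have hb : LinearIndependent K b :=
    ((finBasis K U).linearIndependent.comp _ (Fin.castLE_injective ht)).map' U.subtype
      U.ker_subtype
  refine ⟨Submodule.span K (Set.range b), ?_, ?_⟩
  · rw [Submodule.span_le, Set.range_subset_iff]
    exact fun i => (finBasis K U (Fin.castLE ht i)).2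
  · rw [finrank_span_eq_card hb, Fintype.card_fin]

/-- Singleton-type bound: a subcode vanishing on `q` columns has codimension at most `m * q`. -/
theorem exists_subcode_finrank_rowSupport_le {m n : ℕ}
    (C : Submodule K (Matrix (Fin m) (Fin n) K)) {t q : ℕ} (hq : q ≤ n)
    (h : t + m * q ≤ finrank K C) :
    ∃ D ≤ C, finrank K D = t ∧ finrank K (rowSupport D) ≤ n - q := by
  let proj : (Fin n → K) →ₗ[K] (Fin q → K) := LinearMap.funLeft K K (Fin.castLE hq)
  let f : C →ₗ[K] (Fin m → Fin q → K) := (proj.compLeft (Fin m)).comp C.subtype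
  have hf := f.finrank_range_add_finrank_ker
  have hr := (LinearMap.range f).finrank_le
  rw [finrank_pi_fintype] at hr
  simp only [finrank_fin_fun, Finset.sum_const, Finset.card_univ, Fintype.card_fin,
    smul_eq_mul] at hr
  have hker : t ≤ finrank K ((LinearMap.ker f).map C.subtype) := by
    rw [finrank_map_of_injective C.injective_subtype]
    omega
  obtain ⟨D, hD, hDt⟩ := exists_submodule_le_finrank_eq _ hker
  refine ⟨D, hD.trans (Submodule.map_subtype_le C _), hDt, ?_⟩
  have hle : rowSupport D ≤ LinearMap.ker proj := by
    refine rowSupport_le_iff.2 fun M hM i => ?_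
    obtain ⟨M', hM', rfl⟩ := hD hM
    exact congrFun hM' i
  refine (Submodule.finrank_mono hle).trans ?_
  have hp := proj.finrank_range_add_finrank_ker
  rw [LinearMap.range_eq_top.2
    (LinearMap.funLeft_surjective_of_injective K K _ (Fin.castLE_injective hq)), finrank_top,
    finrank_fin_fun, finrank_fin_fun] at hp
  lia

theorem dRow_le_finrank_rowSupport {m n : ℕ} {C D : Submodule K (Matrix (Fin m) (Fin n) K)}
    {t : ℕ} (hDC : D ≤ C) (hDt : finrank K D = t) : dRow C t ≤ finrank K (rowSupport D) :=
  Nat.sInf_le ⟨D, hDC, hDt, rfl⟩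

theorem dRow_le_of_add_mul_le {m n : ℕ} (C : Submodule K (Matrix (Fin m) (Fin n) K)) {t q : ℕ}
    (hq : q ≤ n) (h : t + m * q ≤ finrank K C) : dRow C t ≤ n - q := by
  obtain ⟨D, hDC, hDt, hD⟩ := exists_subcode_finrank_rowSupport_le C hq h
  exact (dRow_le_finrank_rowSupport hDC hDt).trans hD

theorem le_dRow_iff {m n : ℕ} (C : Submodule K (Matrix (Fin m) (Fin n) K)) {t r : ℕ}
    (ht : t ≤ finrank K C) :
    r ≤ dRow C t ↔ ∀ D ≤ C, finrank K D = t → r ≤ finrank K (rowSupport D) := by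
  constructor
  · exact fun h D hDC hDt => h.trans (dRow_le_finrank_rowSupport hDC hDt)
  · intro h
    obtain ⟨D₀, hD₀C, hD₀t⟩ := exists_submodule_le_finrank_eq C ht
    refine le_csInf ⟨_, D₀, hD₀C, hD₀t, rfl⟩ ?_
    rintro _ ⟨D, hDC, hDt, rfl⟩
    exact h D hDC hDt

end Helpers

/-- For `n ≤ m` and a column-nondegenerate code `C` with associated
column-system `S`: `d_t^r(C) = n − ⌊(k−t)/m⌋` iff `S` is `(k−t)`-column-scattered, i.e.
every subspace `W ⊆ K^k` with `dim W = k − t` satisfies `m·dim S_c(W) ≤ k − t`. -/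
theorem stmt8 {K : Type*} [Field K] {m n k : ℕ}
    (hm : 0 < m) (hn : 0 < n) (hk : 0 < k) (hmn : n ≤ m)
    (B : Fin k → Matrix (Fin m) (Fin n) K) (hB : LinearIndependent K B)
    (C : Submodule K (Matrix (Fin m) (Fin n) K))
    (hC : C = Submodule.span K (Set.range B))
    (hnd : rowSupport C = ⊤)
    (S : Submodule K (Matrix (Fin k) (Fin m) K))
    (hS : S = Submodule.span K (Set.range (colSlices B)))
    (t : ℕ) (ht1 : 1 ≤ t) (htk : t ≤ k) :
    dRow C t = n - (k - t) / m ↔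
      ∀ W : Submodule K (Fin k → K), Module.finrank K W = k - t →
        m * Module.finrank K (Sc S W) ≤ k - t := by
  rw [← range_combMap] at hC hS
  subst hC hS
  have hinj := combMap_injective hB
  have hCk : finrank K (LinearMap.range (combMap B)) = k := by
    rw [LinearMap.finrank_range_of_inj hinj, finrank_fin_fun]
  have hkmn : k ≤ m * n := by
    rw [← hCk]
    refine (Submodule.finrank_le _).trans_eq ?_
    simp [finrank_matrix]
  have hq : (k - t) / m ≤ n :=
    (Nat.div_le_div_right ((Nat.sub_le k t).trans hkmn)).trans_eq (Nat.mul_div_cancel_left n hm)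
  have hqm := Nat.mul_div_le (k - t) m
  have hsingleton : dRow (LinearMap.range (combMap B)) t ≤ n - (k - t) / m :=
    dRow_le_of_add_mul_le _ hq (by lia)
  have hscattered (d : ℕ) : m * d ≤ k - t ↔ d ≤ (k - t) / m := by
    rw [Nat.le_div_iff_mul_le hm, mul_comm]
  rw [show dRow (LinearMap.range (combMap B)) t = n - (k - t) / m ↔
    n - (k - t) / m ≤ dRow (LinearMap.range (combMap B)) t from
      ⟨Eq.ge, hsingleton.antisymm⟩, le_dRow_iff _ (htk.trans_eq hCk.symm)]
  constructor
  · intro h W hW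
    have hperp := finrank_add_finrank_perpSub W
    have hsum := finrank_rowSupport_add_finrank_Sc hnd (perpSub W)
    have hle := h _ (LinearMap.map_le_range (p := perpSub W)) <| by
      rw [finrank_map_of_injective hinj]
      lia
    rw [perpSub_perpSub] at hsum
    rw [hscattered]
    lia
  · intro h D hDC hDt
    have hmap : (D.comap (combMap B)).map (combMap B) = D := Submodule.map_comap_eq_of_le hDC
    have hU : finrank K (D.comap (combMap B)) = t := by
      rw [← finrank_map_of_injective hinj, hmap, hDt]
    have hperp := finrank_add_finrank_perpSub (D.comap (combMap B))
    have hsum := finrank_rowSupport_add_finrank_Sc hnd (D.comap (combMap B))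
    have hle := h (perpSub (D.comap (combMap B))) (by lia)
    rw [hmap] at hsum
    rw [hscattered] at hle
    lia
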